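/- Let L be a field and let · be a deformed Laurent series product on L((T^{-1})). For a ∈ L and i ∈ ℤ let δ_i(a) ∈ L be the coefficient of T^i in T·a; then δ_i(a) = 0 for i > 1 (so T·a = δ_1(a)T + Σ_{i≤0} δ_i(a)T^i), each δ_i : L → L is additive, and δ_1 : L → L is an injective ring homomorphism. -/

import Mathlib

noncomputable section

open scoped Classical

/-- The generalized binomial coefficient `binom n k` for an integer `n` and natural `k`;
it equals `n (n-1) ⋯ (n-k+1) / k!` (an integer). -/
def zbinom (n : ℤ) (k : ℕ) : ℤ :=
  if 0 ≤ n then (n.toNat.choose k : ℤ) else (-1) ^ k * (((k : ℤ) - 1 - n).toNat.choose k : ℤ)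

/-- The generalized binomial coefficient `a (a-1) ⋯ (a-k+1) / k!` in a field `K`
(of characteristic zero in all uses). -/
def gbinom {K : Type*} [Field K] (a : K) (k : ℕ) : K :=
  (∏ i ∈ Finset.range k, (a - (i : K))) / (k.factorial : K)

/-- Inverse Laurent series over `L`: formal sums `Σ_{i ∈ ℤ} a_i T^i` whose support is
bounded above. -/
structure InvLaurent (L : Type*) [Zero L] where
  coeff : ℤ → L
  bdd' : ∃ N : ℤ, ∀ i : ℤ, N < i → coeff i = 0

namespace InvLaurent

variable {L : Type*} [Field L]

@[ext] theorem ext {f g : InvLaurent L} (h : ∀ i, f.coeff i = g.coeff i) : f = g := by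
  cases f; cases g
  simp only [mk.injEq]
  funext i; exact h i

instance : Zero (InvLaurent L) := ⟨⟨fun _ => 0, ⟨0, fun _ _ => rfl⟩⟩⟩

instance : Add (InvLaurent L) :=
  ⟨fun f g => ⟨fun i => f.coeff i + g.coeff i, by
    obtain ⟨N, hN⟩ := f.bdd'; obtain ⟨M, hM⟩ := g.bdd'
    exact ⟨max N M, fun i hi => by
      show f.coeff i + g.coeff i = 0
      rw [hN i (lt_of_le_of_lt (le_max_left _ _) hi),
        hM i (lt_of_le_of_lt (le_max_right _ _) hi), add_zero]⟩⟩⟩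

instance : Neg (InvLaurent L) :=
  ⟨fun f => ⟨fun i => -f.coeff i, by
    obtain ⟨N, hN⟩ := f.bdd'
    exact ⟨N, fun i hi => by show -f.coeff i = 0; rw [hN i hi, neg_zero]⟩⟩⟩

@[simp] lemma coeff_zero (i : ℤ) : (0 : InvLaurent L).coeff i = 0 := rfl
@[simp] lemma coeff_add (f g : InvLaurent L) (i : ℤ) :
    (f + g).coeff i = f.coeff i + g.coeff i := rfl
@[simp] lemma coeff_neg (f : InvLaurent L) (i : ℤ) : (-f).coeff i = -f.coeff i := rfl

instance : AddCommGroup (InvLaurent L) where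
  add_assoc f g h := by ext i; simp [add_assoc]
  zero_add f := by ext i; simp
  add_zero f := by ext i; simp
  neg_add_cancel f := by ext i; simp
  add_comm f g := by ext i; simp [add_comm]
  nsmul := nsmulRec
  zsmul := zsmulRec

@[simp] lemma coeff_sub (f g : InvLaurent L) (i : ℤ) :
    (f - g).coeff i = f.coeff i - g.coeff i := by
  rw [sub_eq_add_neg, coeff_add, coeff_neg, sub_eq_add_neg]

/-- The series `a T^n`. -/
def single (n : ℤ) (a : L) : InvLaurent L :=
  ⟨fun i => if i = n then a else 0, ⟨n, fun i hi => if_neg (by omega)⟩⟩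

/-- The series `T^n`. -/
def T (L : Type*) [Field L] (n : ℤ) : InvLaurent L := single n 1

/-- Coefficientwise multiplication by a scalar `b ∈ L` on the left. -/
def lsmul (b : L) (f : InvLaurent L) : InvLaurent L :=
  ⟨fun i => b * f.coeff i, by
    obtain ⟨N, hN⟩ := f.bdd'
    exact ⟨N, fun i hi => by show b * f.coeff i = 0; rw [hN i hi, mul_zero]⟩⟩

/-- The standard degree map, with values in `ℤ ∪ {-∞}`. -/
def deg (f : InvLaurent L) : WithBot ℤ :=
  if f = 0 then ⊥ else ↑(sSup {i : ℤ | f.coeff i ≠ 0})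

lemma deg_eq_bot_iff (f : InvLaurent L) : deg f = ⊥ ↔ f = 0 := by
  unfold deg
  split
  · simpa
  · simp_all

lemma support_nonempty {f : InvLaurent L} (hf : f ≠ 0) :
    {i : ℤ | f.coeff i ≠ 0}.Nonempty := by
  by_contra h
  rw [Set.not_nonempty_iff_eq_empty] at h
  apply hf
  ext i
  have : i ∉ ({i : ℤ | f.coeff i ≠ 0}) := by rw [h]; exact Set.notMem_empty i
  simpa using this

lemma support_bddAbove (f : InvLaurent L) : BddAbove {i : ℤ | f.coeff i ≠ 0} := by
  obtain ⟨N, hN⟩ := f.bdd'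
  exact ⟨N, fun i hi => by by_contra h; exact hi (hN i (by omega))⟩

lemma le_deg {f : InvLaurent L} {i : ℤ} (h : f.coeff i ≠ 0) : (i : WithBot ℤ) ≤ deg f := by
  have hf : f ≠ 0 := by
    intro h0; rw [h0] at h; exact h rfl
  rw [deg, if_neg hf]
  exact_mod_cast le_csSup (support_bddAbove f) h

lemma deg_neg (f : InvLaurent L) : deg (-f) = deg f := by
  unfold deg
  have h0 : -f = 0 ↔ f = 0 := by
    constructor
    · intro h; ext i
      have := congrArg (fun g => InvLaurent.coeff g i) h
      simp only [coeff_neg, coeff_zero, neg_eq_zero] at this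
      simpa using this
    · intro h; rw [h]; ext i; simp
  have hs : {i : ℤ | (-f).coeff i ≠ 0} = {i : ℤ | f.coeff i ≠ 0} := by
    ext i; simp
  rw [hs]
  by_cases h : f = 0
  · rw [if_pos (h0.mpr h), if_pos h]
  · rw [if_neg (fun hh => h (h0.mp hh)), if_neg h]

lemma deg_add_le (f g : InvLaurent L) : deg (f + g) ≤ max (deg f) (deg g) := by
  by_cases h : f + g = 0
  · rw [(deg_eq_bot_iff _).mpr h]; exact bot_le
  · rw [deg, if_neg h]
    have hne := support_nonempty h
    have : sSup {i : ℤ | (f + g).coeff i ≠ 0} ∈ {i : ℤ | (f + g).coeff i ≠ 0} := by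
      obtain ⟨N, hN⟩ := support_bddAbove (f + g)
      obtain ⟨m, hm, hmax⟩ := Int.exists_greatest_of_bdd ⟨N, fun i hi => hN hi⟩ hne
      have : sSup {i : ℤ | (f + g).coeff i ≠ 0} = m :=
        le_antisymm (csSup_le hne hmax) (le_csSup (support_bddAbove _) hm)
      rw [this]; exact hm
    set m := sSup {i : ℤ | (f + g).coeff i ≠ 0} with hm
    have hc : (f + g).coeff m ≠ 0 := this
    rw [coeff_add] at hc
    rcases (by by_contra hh; push_neg at hh; rw [hh.1, hh.2, add_zero] at hc; exact hc rfl :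
        f.coeff m ≠ 0 ∨ g.coeff m ≠ 0) with hf | hg
    · exact le_trans (le_deg hf) (le_max_left _ _)
    · exact le_trans (le_deg hg) (le_max_right _ _)

/-- real-exponential of a degree value: `e^d`, with `e^{-∞} = 0`. -/
def edeg : WithBot ℤ → ℝ
  | ⊥ => 0
  | (n : ℤ) => Real.exp n

lemma edeg_nonneg (d : WithBot ℤ) : 0 ≤ edeg d := by
  cases d with
  | bot => exact le_refl 0
  | coe n => exact le_of_lt (Real.exp_pos _)

lemma edeg_mono {d d' : WithBot ℤ} (h : d ≤ d') : edeg d ≤ edeg d' := by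
  cases d with
  | bot => exact edeg_nonneg d'
  | coe n =>
    cases d' with
    | bot => exact absurd h (by simp)
    | coe m =>
      have : n ≤ m := by exact_mod_cast h
      exact Real.exp_le_exp.mpr (by exact_mod_cast this)

lemma edeg_eq_zero_iff (d : WithBot ℤ) : edeg d = 0 ↔ d = ⊥ := by
  cases d with
  | bot => simp [edeg]
  | coe n =>
    simp only [edeg]
    constructor
    · intro h; exact absurd h (ne_of_gt (Real.exp_pos _))
    · intro h; exact absurd h (by simp)

noncomputable instance : MetricSpace (InvLaurent L) where
  dist f g := edeg (deg (f - g))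
  dist_self f := by
    show edeg (deg (f - f)) = 0
    rw [sub_self, (deg_eq_bot_iff (0 : InvLaurent L)).mpr rfl]
    rfl
  dist_comm f g := by
    show edeg (deg (f - g)) = edeg (deg (g - f))
    have h : g - f = -(f - g) := by abel
    rw [h, deg_neg]
  dist_triangle f g h := by
    show edeg (deg (f - h)) ≤ edeg (deg (f - g)) + edeg (deg (g - h))
    have h1 : f - h = (f - g) + (g - h) := by abel
    have h2 : deg (f - h) ≤ max (deg (f - g)) (deg (g - h)) := by
      rw [h1]; exact deg_add_le _ _
    calc edeg (deg (f - h)) ≤ edeg (max (deg (f - g)) (deg (g - h))) := edeg_mono h2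
      _ ≤ edeg (deg (f - g)) + edeg (deg (g - h)) := by
          rcases max_cases (deg (f - g)) (deg (g - h)) with ⟨hm, _⟩ | ⟨hm, _⟩ <;> rw [hm]
          · exact le_add_of_nonneg_right (edeg_nonneg _)
          · exact le_add_of_nonneg_left (edeg_nonneg _)
  eq_of_dist_eq_zero := by
    intro f g hd
    have hd' : edeg (deg (f - g)) = 0 := hd
    have : deg (f - g) = ⊥ := (edeg_eq_zero_iff _).mp hd'
    have := (deg_eq_bot_iff _).mp this
    exact sub_eq_zero.mp this

end InvLaurent

open InvLaurent

/-- A deformed Laurent series product on `L((T⁻¹))`: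
an associative, distributive, jointly continuous multiplication which restricts to left
scalar multiplication by `L`, satisfies `T^i · T^j = T^{i+j}`, and is compatible with the
standard degree map. -/
structure DeformedProduct (L : Type*) [Field L] where
  mul : InvLaurent L → InvLaurent L → InvLaurent L
  mul_assoc : ∀ f g h, mul (mul f g) h = mul f (mul g h)
  left_distrib : ∀ f g h, mul f (g + h) = mul f g + mul f h
  right_distrib : ∀ f g h, mul (f + g) h = mul f h + mul g h
  continuous_mul : Continuous fun p : InvLaurent L × InvLaurent L => mul p.1 p.2
  lsmul_eq : ∀ (b : L) (f : InvLaurent L), mul (single 0 b) f = lsmul b f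
  T_mul_T : ∀ i j : ℤ, mul (T L i) (T L j) = T L (i + j)
  deg_mul : ∀ f g, deg (mul f g) = deg f + deg g

/-- `HasDelta μ δ` says that `T · a = a T + Σ_{i ≤ 0} δ_i(a) T^i` for all `a ∈ L`. -/
def HasDelta {L : Type*} [Field L] (μ : DeformedProduct L) (δ : ℤ → L → L) : Prop :=
  ∀ (a : L) (i : ℤ), (μ.mul (T L 1) (single 0 a)).coeff i =
    if i = 1 then a else if i ≤ 0 then δ i a else 0

/-- Composition `δ_{j₁} ∘ ⋯ ∘ δ_{j_k}` along a list `[j₁, …, j_k]`. -/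
def dcomp {L : Type*} [Field L] (δ : ℤ → L → L) : List ℤ → L → L
  | [], a => a
  | j :: js, a => δ j (dcomp δ js a)

/-- The Leibniz-type identity (★) for the family `δ_i`, `i ≤ 0`. -/
def LeibnizStar {L : Type*} [Field L] (δ : ℤ → L → L) : Prop :=
  ∀ i : ℤ, i ≤ 0 → ∀ a b : L,
    δ i (a * b) = a * δ i b + δ i a * b +
      ∑ᶠ p : ℤ × List ℤ,
        if p.1 ≤ 0 ∧ p.2 ≠ [] ∧ (∀ j ∈ p.2, j ≤ 0) ∧
            p.2.sum - (p.2.length : ℤ) + p.1 = i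
        then zbinom p.1 p.2.length • (δ p.1 a * dcomp δ p.2 b) else 0

end

namespace InvLaurent

variable {L : Type*} [Field L]

lemma coeff_single (n : ℤ) (a : L) (i : ℤ) :
    (single n a).coeff i = if i = n then a else 0 := rfl

lemma coeff_T (n i : ℤ) : (T L n).coeff i = if i = n then 1 else 0 := rfl

lemma coeff_lsmul (b : L) (f : InvLaurent L) (i : ℤ) :
    (lsmul b f).coeff i = b * f.coeff i := rfl

lemma single_add (n : ℤ) (a b : L) : single n (a + b) = single n a + single n b := by
  ext i
  simp only [coeff_add, coeff_single]
  split_ifs <;> simp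

lemma lsmul_single (b : L) (n : ℤ) (a : L) : lsmul b (single n a) = single n (b * a) := by
  ext i
  simp only [coeff_lsmul, coeff_single, mul_ite, mul_zero]

lemma coeff_eq_zero_of_deg_lt {f : InvLaurent L} {i : ℤ} (h : deg f < i) : f.coeff i = 0 :=
  by_contra fun hi => h.not_ge (le_deg hi)

lemma exists_deg_eq_coe_of_ne_zero {f : InvLaurent L} (hf : f ≠ 0) :
    ∃ n : ℤ, deg f = n ∧ f.coeff n ≠ 0 :=
  ⟨_, if_neg hf, Int.csSup_mem (support_nonempty hf) (support_bddAbove f)⟩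

lemma deg_lt_coe_iff {f : InvLaurent L} {n : ℤ} :
    deg f < n ↔ ∀ i, n ≤ i → f.coeff i = 0 := by
  refine ⟨fun h i hi => coeff_eq_zero_of_deg_lt (h.trans_le (WithBot.coe_le_coe.2 hi)),
    fun h => ?_⟩
  rcases eq_or_ne f 0 with hf | hf
  · rw [(deg_eq_bot_iff f).2 hf]
    exact WithBot.bot_lt_coe n
  · obtain ⟨m, hdeg, hm⟩ := exists_deg_eq_coe_of_ne_zero hf
    rw [hdeg, WithBot.coe_lt_coe]
    exact lt_of_not_ge fun hnm => hm (h m hnm)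

lemma deg_single_le (n : ℤ) (a : L) : deg (single n a) ≤ n := by
  rcases eq_or_ne (single n a) 0 with h | h
  · rw [(deg_eq_bot_iff _).2 h]
    exact bot_le
  · obtain ⟨m, hdeg, hm⟩ := exists_deg_eq_coe_of_ne_zero h
    rw [coeff_single, ite_ne_right_iff] at hm
    rw [hdeg, hm.1]

lemma deg_T_le (n : ℤ) : deg (T L n) ≤ n :=
  deg_single_le n 1

lemma deg_sub_lsmul_T_lt {f : InvLaurent L} {n : ℤ} (hf : deg f ≤ n) :
    deg (f - lsmul (f.coeff n) (T L n)) < n := by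
  refine deg_lt_coe_iff.2 fun i hi => ?_
  rw [coeff_sub, coeff_lsmul, coeff_T]
  rcases hi.eq_or_lt with rfl | hni
  · rw [if_pos rfl, mul_one, sub_self]
  · rw [coeff_eq_zero_of_deg_lt (hf.trans_lt (WithBot.coe_lt_coe.2 hni)), if_neg hni.ne',
      mul_zero, sub_zero]

end InvLaurent

namespace DeformedProduct

open InvLaurent

variable {L : Type*} [Field L] (μ : DeformedProduct L)

lemma deg_mul_le {f g : InvLaurent L} {m n : ℤ} (hf : deg f ≤ m) (hg : deg g ≤ n) :
    deg (μ.mul f g) ≤ (m + n : ℤ) := by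
  rw [μ.deg_mul, WithBot.coe_add]
  exact add_le_add hf hg

lemma deg_mul_lt {f g : InvLaurent L} {m n : ℤ} (hf : deg f < m) (hg : deg g ≤ n) :
    deg (μ.mul f g) < (m + n : ℤ) := by
  rw [μ.deg_mul, WithBot.coe_add]
  exact (add_le_add le_rfl hg).trans_lt (WithBot.add_lt_add_right WithBot.coe_ne_bot hf)

/-- Replacing `f` by its `T ^ m` term changes `f · g` only in degrees below `m + n`. -/
lemma coeff_mul_add_of_deg_le {f g : InvLaurent L} {m n : ℤ}
    (hf : deg f ≤ m) (hg : deg g ≤ n) :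
    (μ.mul f g).coeff (m + n) = f.coeff m * (μ.mul (T L m) g).coeff (m + n) := by
  set r := f - lsmul (f.coeff m) (T L m) with hr
  have hf_eq : f = μ.mul (single 0 (f.coeff m)) (T L m) + r := by
    rw [μ.lsmul_eq, hr, add_sub_cancel]
  have hr_mul : (μ.mul r g).coeff (m + n) = 0 :=
    coeff_eq_zero_of_deg_lt (μ.deg_mul_lt (deg_sub_lsmul_T_lt hf) hg)
  calc (μ.mul f g).coeff (m + n)
      = (μ.mul (μ.mul (single 0 (f.coeff m)) (T L m) + r) g).coeff (m + n) := by rw [← hf_eq]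
    _ = (μ.mul (single 0 (f.coeff m)) (μ.mul (T L m) g)).coeff (m + n) := by
      rw [μ.right_distrib, coeff_add, hr_mul, add_zero, μ.mul_assoc]
    _ = f.coeff m * (μ.mul (T L m) g).coeff (m + n) := by rw [μ.lsmul_eq, coeff_lsmul]

lemma deg_T_mul_single_zero_le (m : ℤ) (a : L) : deg (μ.mul (T L m) (single 0 a)) ≤ m := by
  simpa only [add_zero] using μ.deg_mul_le (deg_T_le m) (deg_single_le 0 a)

/-- The additive map `δ_i : L → L` taking `a` to the coefficient of `T ^ i` in `T · a`. -/
def delta (i : ℤ) : L →+ L :=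
  AddMonoidHom.mk' (fun a => (μ.mul (T L 1) (single 0 a)).coeff i) fun a b => by
    rw [single_add, μ.left_distrib, coeff_add]

lemma delta_apply (i : ℤ) (a : L) :
    μ.delta i a = (μ.mul (T L 1) (single 0 a)).coeff i := rfl

lemma delta_eq_zero_of_one_lt {i : ℤ} (hi : 1 < i) (a : L) : μ.delta i a = 0 :=
  coeff_eq_zero_of_deg_lt <|
    (μ.deg_T_mul_single_zero_le 1 a).trans_lt (WithBot.coe_lt_coe.2 hi)

lemma delta_one_one : μ.delta 1 1 = 1 := by
  change (μ.mul (T L 1) (T L 0)).coeff 1 = 1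
  rw [μ.T_mul_T, add_zero, coeff_T, if_pos rfl]

lemma delta_one_mul (a b : L) : μ.delta 1 (a * b) = μ.delta 1 a * μ.delta 1 b := by
  rw [delta_apply, ← lsmul_single, ← μ.lsmul_eq, ← μ.mul_assoc]
  exact μ.coeff_mul_add_of_deg_le (μ.deg_T_mul_single_zero_le 1 a) (deg_single_le 0 b)

/-- The leading map `δ_1` as a ring endomorphism of `L`; being a homomorphism out of a field,
it is injective. -/
def deltaOneHom : L →+* L where
  __ := μ.delta 1
  map_one' := μ.delta_one_one
  map_mul' := μ.delta_one_mul

end DeformedProduct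

open InvLaurent in
/-- for a deformed Laurent series product on `L((T⁻¹))`, write
`δ_i(a)` for the coefficient of `T^i` in `T · a`.  Then `δ_i(a) = 0` for `i > 1`
(so `T·a = δ₁(a)T + Σ_{i≤0} δ_i(a)T^i`), each `δ_i` is additive, and `δ₁` is an
injective ring homomorphism `L → L`. -/
theorem deformedProduct_delta_basic (L : Type*) [Field L] (μ : DeformedProduct L)
    (δ : ℤ → L → L) (hδdef : ∀ (i : ℤ) (a : L), δ i a = (μ.mul (T L 1) (single 0 a)).coeff i) :
    (∀ i : ℤ, 1 < i → ∀ a : L, δ i a = 0) ∧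
    (∀ (i : ℤ) (a b : L), δ i (a + b) = δ i a + δ i b) ∧
    (∀ a b : L, δ 1 (a * b) = δ 1 a * δ 1 b) ∧ δ 1 1 = 1 ∧
    Function.Injective (δ 1) := by
  obtain rfl : δ = fun i a => μ.delta i a := funext₂ hδdef
  exact ⟨fun _ => μ.delta_eq_zero_of_one_lt, fun i => map_add (μ.delta i), μ.delta_one_mul,
    μ.delta_one_one, μ.deltaOneHom.injective⟩
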